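/- arXiv:math/0005188 — 4 statements merged into one kernel-verified Lean document; each statement's English description precedes it below -/
import Mathlib

section
/- Let U ⊆ E be open and let φ : E → ℝ satisfy ContDiffOn ℝ 2 φ U. Then the following are equivalent: (i) φ is a critical point of the Dirichlet energy under compactly supported variations, i.e. for every test function ψ on U the function t ↦ ∫ x in tsupport ψ, ‖∇φ x + t • ∇ψ x‖^2 has derivative 0 at t = 0 (HasDerivAt _ 0 0); (ii) Δφ x = 0 for every x ∈ U. -/
open MeasureTheory RealInnerProductSpace

/-!
Expanding the square shows that the derivative at `t = 0` of `t ↦ ∫ ‖∇φ + t • ∇ψ‖ ^ 2` is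
`2 * ∫ ⟪∇φ, ∇ψ⟫`. Integrating by parts along each vector of an orthonormal basis turns this into
`-2 * ∫ ψ * Δφ`; there is no boundary term because `ψ` has compact support in `U`. Since `Δφ` is
continuous on `U`, all these integrals vanish if and only if `Δφ` vanishes on `U`.
-/

section FirstVariation

variable {X F : Type*} [MeasurableSpace X] {μ : Measure X} [NormedAddCommGroup F]
  [InnerProductSpace ℝ F] {a b : X → F}

theorem integral_norm_add_smul_sq (ha : Integrable (fun x => ‖a x‖ ^ 2) μ)
    (hab : Integrable (fun x => ⟪a x, b x⟫) μ) (hb : Integrable (fun x => ‖b x‖ ^ 2) μ) (t : ℝ) :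
    ∫ x, ‖a x + t • b x‖ ^ 2 ∂μ =
      ∫ x, ‖a x‖ ^ 2 ∂μ + t * (2 * ∫ x, ⟪a x, b x⟫ ∂μ) + t ^ 2 * ∫ x, ‖b x‖ ^ 2 ∂μ := by
  have expand (x : X) :
      ‖a x + t • b x‖ ^ 2 = ‖a x‖ ^ 2 + t * (2 * ⟪a x, b x⟫) + t ^ 2 * ‖b x‖ ^ 2 := by
    rw [norm_add_sq_real, inner_smul_right, norm_smul, mul_pow, Real.norm_eq_abs, sq_abs]
    ring
  have hcross : Integrable (fun x => t * (2 * ⟪a x, b x⟫)) μ := (hab.const_mul 2).const_mul t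
  have hlinear : Integrable (fun x => ‖a x‖ ^ 2 + t * (2 * ⟪a x, b x⟫)) μ := ha.add hcross
  simp_rw [expand]
  rw [integral_add hlinear (hb.const_mul _), integral_add ha hcross]
  simp only [integral_const_mul]

theorem hasDerivAt_integral_norm_add_smul_sq (ha : Integrable (fun x => ‖a x‖ ^ 2) μ)
    (hab : Integrable (fun x => ⟪a x, b x⟫) μ) (hb : Integrable (fun x => ‖b x‖ ^ 2) μ) :
    HasDerivAt (fun t : ℝ => ∫ x, ‖a x + t • b x‖ ^ 2 ∂μ) (2 * ∫ x, ⟪a x, b x⟫ ∂μ) 0 := by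
  simp_rw [integral_norm_add_smul_sq ha hab hb]
  have hlinear := (hasDerivAt_id (0 : ℝ)).mul_const (2 * ∫ x, ⟪a x, b x⟫ ∂μ)
  have hquadratic := ((hasDerivAt_id (0 : ℝ)).pow 2).mul_const (∫ x, ‖b x‖ ^ 2 ∂μ)
  simpa using (hlinear.const_add (∫ x, ‖a x‖ ^ 2 ∂μ)).fun_add hquadratic

end FirstVariation

section DirectionalDerivative

variable {E F : Type*} [NormedAddCommGroup E] [NormedSpace ℝ E] [NormedAddCommGroup F]
  [NormedSpace ℝ F] {U : Set E} {f : E → F}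

theorem contDiffOn_fderiv_apply_of_isOpen {m n : WithTop ℕ∞} (hU : IsOpen U)
    (hf : ContDiffOn ℝ n f U) (hmn : m + 1 ≤ n) (v : E) :
    ContDiffOn ℝ m (fun x => fderiv ℝ f x v) U :=
  (hf.fderiv_of_isOpen hU hmn).clm_apply contDiffOn_const

theorem continuousOn_fderiv_apply_of_isOpen (hU : IsOpen U) (hf : ContDiffOn ℝ 1 f U) (v : E) :
    ContinuousOn (fun x => fderiv ℝ f x v) U :=
  (hf.continuousOn_fderiv_of_isOpen hU le_rfl).clm_apply continuousOn_const

end DirectionalDerivative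

theorem integrable_smul_of_tsupport_subset {X F : Type*} [TopologicalSpace X] [MeasurableSpace X]
    [OpensMeasurableSpace X] {μ : Measure X} [IsFiniteMeasureOnCompacts μ] [NormedAddCommGroup F]
    [NormedSpace ℝ F] {U : Set X} {g : X → ℝ} {f : X → F} (hU : IsOpen U)
    (hg : ContinuousOn g U) (hgc : HasCompactSupport g) (hgU : tsupport g ⊆ U)
    (hf : ContinuousOn f U) : Integrable (fun x => g x • f x) μ :=
  ((hg.smul hf).continuous_of_tsupport_subset hU
    ((tsupport_smul_subset_left g f).trans hgU)).integrable_of_hasCompactSupport hgc.smul_right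

section TestFunctions

open scoped ContDiff

variable {E F : Type*} [NormedAddCommGroup E] [NormedSpace ℝ E] [FiniteDimensional ℝ E]
  [MeasurableSpace E] [BorelSpace E] {μ : Measure E} [NormedAddCommGroup F] [NormedSpace ℝ F]
  {U : Set E} {f : E → F}

theorem integral_smul_fderiv_eq_neg_of_tsupport_subset [μ.IsAddHaarMeasure] {g : E → ℝ}
    (hU : IsOpen U) (hg : ContDiffOn ℝ 1 g U) (hgc : HasCompactSupport g) (hgU : tsupport g ⊆ U)
    (hf : ContDiffOn ℝ 1 f U) (v : E) :
    ∫ x, g x • fderiv ℝ f x v ∂μ = -∫ x, fderiv ℝ g x v • f x ∂μ := by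
  have hg'U : tsupport (fun x => fderiv ℝ g x v) ⊆ U :=
    (tsupport_fderiv_apply_subset ℝ v).trans hgU
  have hgdiff (x : E) : DifferentiableAt ℝ g x := by
    by_cases hx : x ∈ tsupport g
    · exact (hg.differentiableOn one_ne_zero).differentiableAt (hU.mem_nhds (hgU hx))
    · exact (differentiableAt_const 0).congr_of_eventuallyEq
        (notMem_tsupport_iff_eventuallyEq.1 hx)
  exact integral_smul_fderiv_eq_neg_fderiv_smul_of_integrable
    (integrable_smul_of_tsupport_subset hU (continuousOn_fderiv_apply_of_isOpen hU hg v)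
      (hgc.fderiv_apply ℝ v) hg'U hf.continuousOn)
    (integrable_smul_of_tsupport_subset hU hg.continuousOn hgc hgU
      (continuousOn_fderiv_apply_of_isOpen hU hf v))
    (integrable_smul_of_tsupport_subset hU hg.continuousOn hgc hgU hf.continuousOn)
    (fun x _ => hgdiff x)
    (fun x hx => (hf.differentiableOn one_ne_zero).differentiableAt (hU.mem_nhds (hgU hx)))

theorem forall_integral_contDiff_smul_eq_zero_iff [CompleteSpace F] [μ.IsOpenPosMeasure]
    [IsLocallyFiniteMeasure μ] (hU : IsOpen U) (hf : ContinuousOn f U) :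
    (∀ g : E → ℝ, ContDiff ℝ ∞ g → HasCompactSupport g → tsupport g ⊆ U →
        ∫ x, g x • f x ∂μ = 0) ↔
      ∀ x ∈ U, f x = 0 := by
  constructor
  · intro h
    have hae : ∀ᵐ x ∂μ, x ∈ U → f x = 0 := hU.ae_eq_zero_of_integral_contDiff_smul_eq_zero
      (hf.locallyIntegrableOn hU.measurableSet) h
    exact Measure.eqOn_open_of_ae_eq ((ae_restrict_iff' hU.measurableSet).2 hae) hU hf
      continuousOn_const
  · intro h g _ _ hgU
    have hzero (x : E) : g x • f x = 0 := by
      by_cases hx : x ∈ tsupport g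
      · rw [h x (hgU hx), smul_zero]
      · rw [image_eq_zero_of_notMem_tsupport hx, zero_smul]
    simp only [hzero, integral_zero]

end TestFunctions

section Gradient

open scoped Gradient

variable {E : Type*} [NormedAddCommGroup E] [InnerProductSpace ℝ E] [CompleteSpace E]
  {f g : E → ℝ}

theorem continuousOn_gradient_of_isOpen {U : Set E} (hU : IsOpen U) (hf : ContDiffOn ℝ 1 f U) :
    ContinuousOn (∇ f) U :=
  (InnerProductSpace.toDual ℝ E).symm.continuous.comp_continuousOn
    (hf.continuousOn_fderiv_of_isOpen hU le_rfl)

theorem gradient_eq_zero_of_notMem_tsupport {x : E} (hx : x ∉ tsupport f) : ∇ f x = 0 := by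
  rw [gradient, fderiv_of_notMem_tsupport ℝ hx, map_zero]

theorem inner_gradient_gradient_eq_sum {ι : Type*} [Fintype ι] (b : OrthonormalBasis ι ℝ E)
    (x : E) : ⟪∇ f x, ∇ g x⟫ = ∑ i, fderiv ℝ f x (b i) * fderiv ℝ g x (b i) := by
  simp only [← b.sum_inner_mul_inner (∇ f x) (∇ g x), inner_gradient_left, inner_gradient_right,
    conj_trivial]

end Gradient

section Laplacian

open scoped Laplacian

variable {E F : Type*} [NormedAddCommGroup E] [InnerProductSpace ℝ E] [FiniteDimensional ℝ E]
  [NormedAddCommGroup F] [NormedSpace ℝ F] {U : Set E} {f : E → F} {x : E}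

theorem laplacian_eq_sum_fderiv_fderiv {ι : Type*} [Fintype ι] (b : OrthonormalBasis ι ℝ E)
    (hf : DifferentiableAt ℝ (fderiv ℝ f) x) :
    Δ f x = ∑ i, fderiv ℝ (fun y => fderiv ℝ f y (b i)) x (b i) := by
  have hsecond (v : E) : fderiv ℝ (fun y => fderiv ℝ f y v) x v = fderiv ℝ (fderiv ℝ f) x v v := by
    simp [fderiv_clm_apply hf (differentiableAt_const v)]
  simp only [InnerProductSpace.laplacian_eq_iteratedFDeriv_orthonormalBasis f b,
    iteratedFDeriv_two_apply, Matrix.cons_val_zero, Matrix.cons_val_one, hsecond]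

theorem laplacian_eq_sum_fderiv_fderiv_of_contDiffOn {ι : Type*} [Fintype ι]
    (b : OrthonormalBasis ι ℝ E) (hU : IsOpen U) (hf : ContDiffOn ℝ 2 f U) (hx : x ∈ U) :
    Δ f x = ∑ i, fderiv ℝ (fun y => fderiv ℝ f y (b i)) x (b i) :=
  laplacian_eq_sum_fderiv_fderiv b
    (((hf.fderiv_of_isOpen hU one_add_one_eq_two.le).differentiableOn one_ne_zero).differentiableAt
      (hU.mem_nhds hx))

theorem continuousOn_laplacian (hU : IsOpen U) (hf : ContDiffOn ℝ 2 f U) :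
    ContinuousOn (Δ f) U := by
  have hf' : ContDiffOn ℝ 1 (fderiv ℝ f) U := hf.fderiv_of_isOpen hU one_add_one_eq_two.le
  simp only [InnerProductSpace.laplacian_eq_iteratedFDeriv_stdOrthonormalBasis,
    iteratedFDeriv_two_apply]
  exact continuousOn_finsetSum _ fun i _ =>
    ((hf'.continuousOn_fderiv_of_isOpen hU le_rfl).clm_apply continuousOn_const).clm_apply
      continuousOn_const

end Laplacian

section DirichletEnergy

open scoped Gradient Laplacian ContDiff

variable {E : Type*} [NormedAddCommGroup E] [InnerProductSpace ℝ E] [FiniteDimensional ℝ E]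
  [MeasurableSpace E] [BorelSpace E] {μ : Measure E} [μ.IsAddHaarMeasure] {U : Set E}
  {φ ψ : E → ℝ}

theorem integral_mul_laplacian_eq_neg_integral_inner_gradient (hU : IsOpen U)
    (hφ : ContDiffOn ℝ 2 φ U) (hψ : ContDiffOn ℝ 1 ψ U) (hψc : HasCompactSupport ψ)
    (hψU : tsupport ψ ⊆ U) :
    ∫ x, ψ x * Δ φ x ∂μ = -∫ x, ⟪∇ φ x, ∇ ψ x⟫ ∂μ := by
  let b := stdOrthonormalBasis ℝ E
  have hφ' (i) : ContDiffOn ℝ 1 (fun x => fderiv ℝ φ x (b i)) U :=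
    contDiffOn_fderiv_apply_of_isOpen hU hφ one_add_one_eq_two.le (b i)
  have hlaplacian (x : E) :
      ψ x * Δ φ x = ∑ i, ψ x • fderiv ℝ (fun y => fderiv ℝ φ y (b i)) x (b i) := by
    by_cases hx : x ∈ tsupport ψ
    · rw [laplacian_eq_sum_fderiv_fderiv_of_contDiffOn b hU hφ (hψU hx), ← Finset.smul_sum,
        smul_eq_mul]
    · simp only [image_eq_zero_of_notMem_tsupport hx, zero_mul, zero_smul, Finset.sum_const_zero]
  have hinner (x : E) : ⟪∇ φ x, ∇ ψ x⟫ = ∑ i, fderiv ℝ ψ x (b i) • fderiv ℝ φ x (b i) := by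
    simp only [inner_gradient_gradient_eq_sum b, smul_eq_mul, mul_comm]
  calc ∫ x, ψ x * Δ φ x ∂μ
      = ∑ i, ∫ x, ψ x • fderiv ℝ (fun y => fderiv ℝ φ y (b i)) x (b i) ∂μ := by
        simp_rw [hlaplacian]
        exact integral_finsetSum _ fun i _ => integrable_smul_of_tsupport_subset hU
          hψ.continuousOn hψc hψU (continuousOn_fderiv_apply_of_isOpen hU (hφ' i) (b i))
    _ = ∑ i, -∫ x, fderiv ℝ ψ x (b i) • fderiv ℝ φ x (b i) ∂μ :=
        Finset.sum_congr rfl fun i _ =>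
          integral_smul_fderiv_eq_neg_of_tsupport_subset hU hψ hψc hψU (hφ' i) (b i)
    _ = -∫ x, ⟪∇ φ x, ∇ ψ x⟫ ∂μ := by
        simp_rw [hinner]
        rw [Finset.sum_neg_distrib, integral_finsetSum _ fun i _ =>
          integrable_smul_of_tsupport_subset hU (continuousOn_fderiv_apply_of_isOpen hU hψ (b i))
            (hψc.fderiv_apply ℝ _) ((tsupport_fderiv_apply_subset ℝ _).trans hψU)
            (hφ' i).continuousOn]

theorem hasDerivAt_dirichletEnergy (hU : IsOpen U) (hφ : ContDiffOn ℝ 2 φ U)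
    (hψ : ContDiffOn ℝ 1 ψ U) (hψc : HasCompactSupport ψ) (hψU : tsupport ψ ⊆ U) :
    HasDerivAt (fun t : ℝ => ∫ x in tsupport ψ, ‖∇ φ x + t • ∇ ψ x‖ ^ 2 ∂μ)
      (-2 * ∫ x, ψ x * Δ φ x ∂μ) 0 := by
  have hK : IsCompact (tsupport ψ) := hψc
  have hm : MeasurableSet (tsupport ψ) := (isClosed_tsupport ψ).measurableSet
  have hφ' : ContinuousOn (∇ φ) (tsupport ψ) :=
    (continuousOn_gradient_of_isOpen hU (hφ.of_le one_le_two)).mono hψU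
  have hψ' : ContinuousOn (∇ ψ) (tsupport ψ) :=
    (continuousOn_gradient_of_isOpen hU hψ).mono hψU
  have hderiv := hasDerivAt_integral_norm_add_smul_sq
    ((hφ'.norm.pow 2).integrableOn_compact' (μ := μ) hK hm)
    ((hφ'.inner hψ').integrableOn_compact' hK hm) ((hψ'.norm.pow 2).integrableOn_compact' hK hm)
  have hinner : ∫ x in tsupport ψ, ⟪∇ φ x, ∇ ψ x⟫ ∂μ = ∫ x, ⟪∇ φ x, ∇ ψ x⟫ ∂μ :=
    setIntegral_eq_integral_of_forall_compl_eq_zero fun x hx => by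
      rw [gradient_eq_zero_of_notMem_tsupport hx, inner_zero_right]
  rwa [integral_mul_laplacian_eq_neg_integral_inner_gradient hU hφ hψ hψc hψU, neg_mul_neg,
    ← hinner]

variable (μ) in
theorem stmt_5_general (hU : IsOpen U) (hφ : ContDiffOn ℝ 2 φ U) :
    (∀ ψ : E → ℝ, ContDiff ℝ ∞ ψ → HasCompactSupport ψ → tsupport ψ ⊆ U →
        HasDerivAt (fun t : ℝ => ∫ x in tsupport ψ, ‖∇ φ x + t • ∇ ψ x‖ ^ 2 ∂μ) 0 0) ↔
      ∀ x ∈ U, Δ φ x = 0 := by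
  rw [← forall_integral_contDiff_smul_eq_zero_iff (μ := μ) hU (continuousOn_laplacian hU hφ)]
  refine forall₄_congr fun ψ hψ hψc hψU => ?_
  have hderiv := hasDerivAt_dirichletEnergy (μ := μ) hU hφ
    (hψ.of_le (by simp)).contDiffOn hψc hψU
  constructor
  · intro h
    simpa using hderiv.unique h
  · intro h
    simpa only [← smul_eq_mul (ψ _), h, mul_zero] using hderiv

end DirichletEnergy

theorem stmt_5 (n : ℕ) (hn : 1 ≤ n) (U : Set (EuclideanSpace ℝ (Fin n))) (hU : IsOpen U)
    (φ : EuclideanSpace ℝ (Fin n) → ℝ) (hφ : ContDiffOn ℝ 2 φ U) :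
    (∀ ψ : EuclideanSpace ℝ (Fin n) → ℝ, ContDiff ℝ (⊤ : ℕ∞) ψ → HasCompactSupport ψ →
        tsupport ψ ⊆ U →
        HasDerivAt (fun t : ℝ => ∫ x in tsupport ψ, ‖gradient φ x + t • gradient ψ x‖ ^ 2)
          0 0) ↔
      (∀ x ∈ U, (∑ i : Fin n,
          fderiv ℝ (fun y => fderiv ℝ φ y (EuclideanSpace.single i (1:ℝ))) x
            (EuclideanSpace.single i (1:ℝ))) = 0) := by
  refine (stmt_5_general volume hU hφ).trans (forall₂_congr fun x hx => ?_)
  simp only [laplacian_eq_sum_fderiv_fderiv_of_contDiffOn (EuclideanSpace.basisFun (Fin n) ℝ) hU hφ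
    hx, EuclideanSpace.basisFun_apply]
end

section
/- Let U ⊆ E be an open convex set and let a : E → E be a vector field with ContDiffOn ℝ 1 a U. Then there exists a harmonic potential for a on U, i.e. a function φ : E → ℝ such that HasGradientAt φ (a x) x for every x ∈ U and Δφ x = 0 for every x ∈ U, if and only if for every x ∈ U one has both ∂_i a_j x = ∂_j a_i x for all i j : Fin n (skew closedness) and div a x = 0 (direct closedness). -/
open MeasureTheory RealInnerProductSpace

/-!
A potential of `a` is a primitive of the dual 1-form `x ↦ ⟪a x, ·⟫`, whose derivative at `x` is the
bilinear form `(u, v) ↦ ⟪a' x u, v⟫`. The form is closed exactly when each `a' x` is a symmetric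
operator, so symmetry of second derivatives and the Poincaré lemma on a convex open set identify the
fields with a potential. For any potential, `∂ᵥ φ = ⟪a, v⟫` near each point, so the Laplacian
of the potential is the divergence of the field.
-/

open Filter Topology

section BasisCriterion

variable {𝕜 E ι : Type*} [RCLike 𝕜] [NormedAddCommGroup E] [InnerProductSpace 𝕜 E]

theorem isSymmetric_iff_inner_basis (b : Module.Basis ι 𝕜 E) (T : E →ₗ[𝕜] E) :
    T.IsSymmetric ↔ ∀ i j, inner 𝕜 (T (b i)) (b j) = inner 𝕜 (b i) (T (b j)) := by
  refine ⟨fun hT i j => hT (b i) (b j), fun hT => ?_⟩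
  have forms_eq : (innerₛₗ 𝕜 : E →ₗ⋆[𝕜] E →ₗ[𝕜] 𝕜) ∘ₛₗ T = (innerₛₗ 𝕜).compl₂ T :=
    LinearMap.ext_basis b b hT
  exact LinearMap.congr_fun₂ forms_eq

end BasisCriterion

section VectorField

variable {E : Type*} [NormedAddCommGroup E] [InnerProductSpace ℝ E] {a : E → E} {x : E} {U : Set E}

theorem hasFDerivAt_innerSL_comp (ha : DifferentiableAt ℝ a x) :
    HasFDerivAt (fun y => innerSL ℝ (a y)) ((innerSL ℝ : E →L[ℝ] E →L[ℝ] ℝ) ∘L fderiv ℝ a x) x :=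
  (innerSL ℝ : E →L[ℝ] E →L[ℝ] ℝ).hasFDerivAt.comp x ha.hasFDerivAt

theorem fderiv_inner_const_apply (ha : DifferentiableAt ℝ a x) (u v : E) :
    fderiv ℝ (fun y => ⟪a y, v⟫) x u = ⟪fderiv ℝ a x u, v⟫ := by
  simp [fderiv_inner_apply ℝ ha (differentiableAt_const v)]

theorem isSymmetric_fderiv_iff_partialDeriv_comm {ι : Type*} (b : Module.Basis ι ℝ E)
    (ha : DifferentiableAt ℝ a x) :
    (fderiv ℝ a x : E →ₗ[ℝ] E).IsSymmetric ↔
      ∀ i j, fderiv ℝ (fun y => ⟪a y, b j⟫) x (b i) = fderiv ℝ (fun y => ⟪a y, b i⟫) x (b j) := by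
  simp only [isSymmetric_iff_inner_basis b, fderiv_inner_const_apply ha,
    ContinuousLinearMap.coe_coe, real_inner_comm (b _) (fderiv ℝ a x _)]

variable [CompleteSpace E] {φ : E → ℝ}

theorem isSymmetric_fderiv_of_eventually_hasGradientAt (hφ : ∀ᶠ y in 𝓝 x, HasGradientAt φ (a y) y)
    (ha : DifferentiableAt ℝ a x) : (fderiv ℝ a x : E →ₗ[ℝ] E).IsSymmetric := by
  have hφ' : ∀ᶠ y in 𝓝 x, HasFDerivAt φ (innerSL ℝ (a y)) y :=
    hφ.mono fun _ hy => hy.hasFDerivAt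
  intro u v
  calc ⟪fderiv ℝ a x u, v⟫
      = ⟪fderiv ℝ a x v, u⟫ :=
        second_derivative_symmetric_of_eventually hφ' (hasFDerivAt_innerSL_comp ha) u v
    _ = ⟪u, fderiv ℝ a x v⟫ := real_inner_comm _ _

theorem exists_hasGradientAt_of_isSymmetric_fderiv (hU : IsOpen U) (hUc : Convex ℝ U)
    (ha : DifferentiableOn ℝ a U) (hsymm : ∀ x ∈ U, (fderiv ℝ a x : E →ₗ[ℝ] E).IsSymmetric) :
    ∃ φ : E → ℝ, ∀ x ∈ U, HasGradientAt φ (a x) x := by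
  have hω : ∀ x ∈ U, HasFDerivAt (fun y => innerSL ℝ (a y))
      ((innerSL ℝ : E →L[ℝ] E →L[ℝ] ℝ) ∘L fderiv ℝ a x) x := fun x hx =>
    hasFDerivAt_innerSL_comp (ha.differentiableAt (hU.mem_nhds hx))
  have hclosed : ∀ x ∈ U, ∀ u v, fderiv ℝ (fun y => innerSL ℝ (a y)) x u v =
      fderiv ℝ (fun y => innerSL ℝ (a y)) x v u := fun x hx u v => by
    rw [(hω x hx).fderiv]
    exact (hsymm x hx u v).trans (real_inner_comm _ _)
  obtain ⟨φ, hφ⟩ := hUc.exists_forall_hasFDerivAt_of_fderiv_symmetric hU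
    (fun x hx => (hω x hx).differentiableAt.differentiableWithinAt) hclosed
  exact ⟨φ, fun x hx => hasGradientAt_iff_hasFDerivAt.mpr (hφ x hx)⟩

theorem exists_hasGradientAt_iff_isSymmetric_fderiv (hU : IsOpen U) (hUc : Convex ℝ U)
    (ha : DifferentiableOn ℝ a U) :
    (∃ φ : E → ℝ, ∀ x ∈ U, HasGradientAt φ (a x) x) ↔
      ∀ x ∈ U, (fderiv ℝ a x : E →ₗ[ℝ] E).IsSymmetric :=
  ⟨fun ⟨_, hφ⟩ _ hx => isSymmetric_fderiv_of_eventually_hasGradientAt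
      (eventually_of_mem (hU.mem_nhds hx) hφ) (ha.differentiableAt (hU.mem_nhds hx)),
    exists_hasGradientAt_of_isSymmetric_fderiv hU hUc ha⟩

theorem fderiv_fderiv_apply_of_eventually_hasGradientAt
    (hφ : ∀ᶠ y in 𝓝 x, HasGradientAt φ (a y) y) (v : E) :
    fderiv ℝ (fun y => fderiv ℝ φ y v) x = fderiv ℝ (fun y => ⟪a y, v⟫) x := by
  have hpartial : (fun y => fderiv ℝ φ y v) =ᶠ[𝓝 x] fun y => ⟪a y, v⟫ := hφ.mono fun y hy => by
    simp only [hy.hasFDerivAt.fderiv, InnerProductSpace.toDual_apply_apply]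
  exact hpartial.fderiv_eq

/-- When `b` is orthonormal, the two sums are the Laplacian of `φ` and the divergence of `a`. -/
theorem stmt_7_general {ι : Type*} [Fintype ι] (b : Module.Basis ι ℝ E) (hU : IsOpen U)
    (hUc : Convex ℝ U) (ha : DifferentiableOn ℝ a U) :
    (∃ φ : E → ℝ, (∀ x ∈ U, HasGradientAt φ (a x) x) ∧
        ∀ x ∈ U, ∑ i, fderiv ℝ (fun y => fderiv ℝ φ y (b i)) x (b i) = 0) ↔
      ∀ x ∈ U,
        (∀ i j, fderiv ℝ (fun y => ⟪a y, b j⟫) x (b i) = fderiv ℝ (fun y => ⟪a y, b i⟫) x (b j)) ∧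
        ∑ i, fderiv ℝ (fun y => ⟪a y, b i⟫) x (b i) = 0 := by
  have laplacian_eq_div (φ : E → ℝ) (hφ : ∀ x ∈ U, HasGradientAt φ (a x) x) (x : E) (hx : x ∈ U) :
      ∑ i, fderiv ℝ (fun y => fderiv ℝ φ y (b i)) x (b i) =
        ∑ i, fderiv ℝ (fun y => ⟪a y, b i⟫) x (b i) := by
    simp only [fderiv_fderiv_apply_of_eventually_hasGradientAt
      (eventually_of_mem (hU.mem_nhds hx) hφ)]
  have symm_iff (x : E) (hx : x ∈ U) := isSymmetric_fderiv_iff_partialDeriv_comm b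
    (ha.differentiableAt (hU.mem_nhds hx))
  have potential_iff := exists_hasGradientAt_iff_isSymmetric_fderiv hU hUc ha
  constructor
  · rintro ⟨φ, hφ, hΔ⟩ x hx
    exact ⟨(symm_iff x hx).mp (potential_iff.mp ⟨φ, hφ⟩ x hx),
      (laplacian_eq_div φ hφ x hx).symm.trans (hΔ x hx)⟩
  · intro h
    obtain ⟨φ, hφ⟩ := potential_iff.mpr fun x hx => (symm_iff x hx).mpr (h x hx).1
    exact ⟨φ, hφ, fun x hx => (laplacian_eq_div φ hφ x hx).trans (h x hx).2⟩

end VectorField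

theorem stmt_7 (n : ℕ) (hn : 1 ≤ n) (U : Set (EuclideanSpace ℝ (Fin n)))
    (hUopen : IsOpen U) (hUconv : Convex ℝ U)
    (a : EuclideanSpace ℝ (Fin n) → EuclideanSpace ℝ (Fin n))
    (ha : ContDiffOn ℝ 1 a U) :
    (∃ φ : EuclideanSpace ℝ (Fin n) → ℝ,
        (∀ x ∈ U, HasGradientAt φ (a x) x) ∧
        (∀ x ∈ U, (∑ i : Fin n,
          fderiv ℝ (fun y => fderiv ℝ φ y (EuclideanSpace.single i (1:ℝ))) x
            (EuclideanSpace.single i (1:ℝ))) = 0)) ↔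
      (∀ x ∈ U,
        (∀ i j : Fin n,
          fderiv ℝ (fun y => ⟪a y, EuclideanSpace.single j (1:ℝ)⟫) x
              (EuclideanSpace.single i (1:ℝ)) =
            fderiv ℝ (fun y => ⟪a y, EuclideanSpace.single i (1:ℝ)⟫) x
              (EuclideanSpace.single j (1:ℝ))) ∧
        (∑ i : Fin n,
          fderiv ℝ (fun y => ⟪a y, EuclideanSpace.single i (1:ℝ)⟫) x
            (EuclideanSpace.single i (1:ℝ))) = 0) := by
  simpa only [OrthonormalBasis.coe_toBasis, EuclideanSpace.basisFun_apply] using stmt_7_general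
    (EuclideanSpace.basisFun (Fin n) ℝ).toBasis hUopen hUconv (ha.differentiableOn one_ne_zero)
end

section
/- Let U ⊆ E be open and connected, and let a : E → E be a vector field that is ContinuousOn a U and conservative on U, i.e. for every curve γ : ℝ → E with ContDiff ℝ 1 γ, γ 0 = γ 1 and γ t ∈ U for all t ∈ Set.Icc (0:ℝ) 1 one has ∫ t in (0:ℝ)..1, ⟪a (γ t), deriv γ t⟫ = 0. Then a is a gradient field on U: there exists φ : E → ℝ with HasGradientAt φ (a x) x for every x ∈ U. -/
open MeasureTheory RealInnerProductSpace

/-!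
On each class of points joined by `C¹` curves in `U`, fix a base point and let `f x` be the integral
of the form along a curve from the base point to `x`; vanishing on loops makes this independent of
the curve. For `y` near `x` the increment `f y - f x` is then the integral along the segment from
`x` to `y`, whose derivative at `y = x` is the value of the form at `x`.

Concatenating `C¹` curves generally creates corners, while only `C¹` loops are tested. So segments
are first reparametrized to be at rest at both endpoints, which does not change their integrals.
-/

open Set Filter Topology unitInterval

section C1Paths

variable {E : Type*} [NormedAddCommGroup E] {x y z : E}

theorem extend_trans_eq_add_sub (γ : Path x y) (γ' : Path y z) (t : ℝ) :
    (γ.trans γ').extend t = γ.extend (2 * t) + γ'.extend (2 * t - 1) - y := by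
  rcases le_total t (1 / 2) with ht | ht
  · rw [Path.extend_trans_of_le_half _ _ ht, γ'.extend_of_le_zero (by linarith),
      add_sub_cancel_right]
  · rw [Path.extend_trans_of_half_le _ _ ht, γ.extend_of_one_le (by linarith),
      add_sub_cancel_left]

variable [NormedSpace ℝ E] {U : Set E}

/-- A path in `U` whose extension to `ℝ` by constants is `C¹`. In particular its velocity vanishes
at both endpoints, so that such paths can be concatenated. -/
structure IsC1PathIn (U : Set E) (γ : Path x y) : Prop where
  contDiff : ContDiff ℝ 1 γ.extend
  mem : ∀ t, γ t ∈ U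

namespace IsC1PathIn

theorem refl (hx : x ∈ U) : IsC1PathIn U (Path.refl x) where
  contDiff := by
    rw [Path.refl_extend]
    exact contDiff_const
  mem _ := hx

theorem symm {γ : Path x y} (hγ : IsC1PathIn U γ) : IsC1PathIn U γ.symm where
  contDiff := by
    rw [Path.extend_symm]
    exact hγ.contDiff.comp (contDiff_const.sub contDiff_id)
  mem t := hγ.mem (σ t)

theorem trans {γ : Path x y} {γ' : Path y z} (hγ : IsC1PathIn U γ) (hγ' : IsC1PathIn U γ') :
    IsC1PathIn U (γ.trans γ') where
  contDiff := by
    rw [funext (extend_trans_eq_add_sub γ γ')]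
    exact ((hγ.contDiff.comp (contDiff_const.mul contDiff_id)).add
      (hγ'.contDiff.comp ((contDiff_const.mul contDiff_id).sub contDiff_const))).sub contDiff_const
  mem := by
    rw [← range_subset_iff, Path.trans_range, union_subset_iff]
    exact ⟨range_subset_iff.2 hγ.mem, range_subset_iff.2 hγ'.mem⟩

theorem source_mem {γ : Path x y} (hγ : IsC1PathIn U γ) : x ∈ U :=
  γ.source ▸ hγ.mem 0

theorem target_mem {γ : Path x y} (hγ : IsC1PathIn U γ) : y ∈ U :=
  γ.target ▸ hγ.mem 1

end IsC1PathIn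

/-- Two points are joined by a `C¹` path in `U`, in the sense of `IsC1PathIn`. A potential on `U` is
determined up to a constant on each class of this relation. -/
def C1JoinedIn (U : Set E) (x y : E) : Prop :=
  ∃ γ : Path x y, IsC1PathIn U γ

namespace C1JoinedIn

theorem refl (hx : x ∈ U) : C1JoinedIn U x x :=
  ⟨_, .refl hx⟩

theorem symm : C1JoinedIn U x y → C1JoinedIn U y x :=
  fun ⟨_, hγ⟩ ↦ ⟨_, hγ.symm⟩

theorem trans : C1JoinedIn U x y → C1JoinedIn U y z → C1JoinedIn U x z :=
  fun ⟨_, hγ⟩ ⟨_, hγ'⟩ ↦ ⟨_, hγ.trans hγ'⟩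

theorem exists_basepoint (U : Set E) :
    ∃ b : E → E, (∀ x ∈ U, C1JoinedIn U (b x) x) ∧ ∀ x y, C1JoinedIn U x y → b x = b y := by
  refine ⟨fun x ↦ Classical.epsilon (C1JoinedIn U · x),
    fun x hx ↦ Classical.epsilon_spec (p := (C1JoinedIn U · x)) ⟨x, refl hx⟩, fun x y hxy ↦ ?_⟩
  have same_class : (C1JoinedIn U · x) = (C1JoinedIn U · y) :=
    funext fun p ↦ propext ⟨fun h ↦ h.trans hxy, fun h ↦ h.trans hxy.symm⟩
  exact congrArg Classical.epsilon same_class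

end C1JoinedIn

end C1Paths

section SmoothReparam

/-- The reparametrization of a path by `Real.smoothTransition`, all of whose derivatives vanish at
`0` and `1`. It turns a path that is `C¹` on `[0, 1]` into one satisfying `IsC1PathIn`. -/
noncomputable def smoothReparam {X : Type*} [TopologicalSpace X] {x y : X} (γ : Path x y) :
    Path x y :=
  γ.reparam (fun t ↦ ⟨Real.smoothTransition t, Real.smoothTransition.nonneg _,
    Real.smoothTransition.le_one _⟩)
    ((Real.smoothTransition.continuous.comp continuous_subtype_val).subtype_mk _)
    (by simp) (by simp)

theorem extend_smoothReparam {X : Type*} [TopologicalSpace X] {x y : X} (γ : Path x y) :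
    ⇑(smoothReparam γ).extend = γ.extend ∘ Real.smoothTransition := by
  ext t
  have ht : Real.smoothTransition t ∈ I :=
    ⟨Real.smoothTransition.nonneg _, Real.smoothTransition.le_one _⟩
  rw [Function.comp_apply, γ.extend_apply ht]
  exact congrArg γ (Subtype.ext Real.smoothTransition.projIcc)

variable {E : Type*} [NormedAddCommGroup E] [NormedSpace ℝ E] {x y : E}

theorem isC1PathIn_smoothReparam {U : Set E} {γ : Path x y} (hγ : ContDiffOn ℝ 1 γ.extend I)
    (hU : ∀ t, γ t ∈ U) : IsC1PathIn U (smoothReparam γ) where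
  contDiff := by
    rw [extend_smoothReparam]
    exact hγ.comp_contDiff Real.smoothTransition.contDiff
      fun t ↦ ⟨Real.smoothTransition.nonneg t, Real.smoothTransition.le_one t⟩
  mem _ := hU _

variable {𝕜 F : Type*} [RCLike 𝕜] [NormedSpace 𝕜 E] [NormedAddCommGroup F] [NormedSpace 𝕜 F]

theorem curveIntegral_smoothReparam (ω : E → E →L[𝕜] F) {γ : Path x y}
    (hγ : DifferentiableOn ℝ γ.extend (Ioo 0 1)) :
    curveIntegral ω (smoothReparam γ) = curveIntegral ω γ := by
  let : NormedSpace ℝ F := .restrictScalars ℝ 𝕜 F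
  have hσ (t : ℝ) : HasDerivAt Real.smoothTransition (deriv Real.smoothTransition t) t :=
    (Real.smoothTransition.contDiffAt.differentiableAt one_ne_zero).hasDerivAt
  have velocity {t : ℝ} (ht : t ∈ Ioo (0 : ℝ) 1) : deriv (smoothReparam γ).extend t =
      deriv Real.smoothTransition t • deriv γ.extend (Real.smoothTransition t) := by
    have hσt : Real.smoothTransition t ∈ Ioo (0 : ℝ) 1 :=
      ⟨Real.smoothTransition.pos_of_pos ht.1, Real.smoothTransition.lt_one_of_lt_one ht.2⟩
    rw [extend_smoothReparam]
    exact ((hγ.differentiableAt (Ioo_mem_nhds hσt.1 hσt.2)).hasDerivAt.scomp t (hσ t)).deriv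
  rw [curveIntegral_eq_intervalIntegral_deriv, curveIntegral_eq_intervalIntegral_deriv]
  calc ∫ t in (0 : ℝ)..1, ω ((smoothReparam γ).extend t) (deriv (smoothReparam γ).extend t)
      = ∫ t in (0 : ℝ)..1, deriv Real.smoothTransition t •
          ((fun s ↦ ω (γ.extend s) (deriv γ.extend s)) ∘ Real.smoothTransition) t := by
        refine intervalIntegral.integral_congr_Ioo_of_le zero_le_one fun t ht ↦ ?_
        simp only [velocity ht]
        rw [extend_smoothReparam]
        exact map_real_smul _ (ω _).continuous _ _
    _ = ∫ s in (0 : ℝ)..1, ω (γ.extend s) (deriv γ.extend s) := by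
        rw [intervalIntegral.integral_deriv_smul_comp_of_deriv_nonneg
          Real.smoothTransition.continuous.continuousOn (fun t _ ↦ hσ t)
          fun t _ ↦ Real.smoothTransition.monotone.deriv_nonneg,
          Real.smoothTransition.zero, Real.smoothTransition.one]

end SmoothReparam

section Conservative

variable {𝕜 E F : Type*} [RCLike 𝕜] [NormedAddCommGroup E] [NormedSpace ℝ E] [NormedSpace 𝕜 E]
  [NormedAddCommGroup F] [NormedSpace 𝕜 F] {x y : E} {U : Set E} {ω : E → E →L[𝕜] F}

theorem IsC1PathIn.curveIntegrable {γ : Path x y} (hγ : IsC1PathIn U γ) (hω : ContinuousOn ω U) :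
    CurveIntegrable ω γ :=
  hω.curveIntegrable_of_contDiffOn hγ.contDiff.contDiffOn hγ.mem

/-- A 1-form is conservative on `U` if its integral along every `C¹` loop in `U` vanishes. Only the
loops that are at rest at their base point, as in `IsC1PathIn`, are tested. -/
def IsConservativeOn (ω : E → E →L[𝕜] F) (U : Set E) : Prop :=
  ∀ (x : E) (γ : Path x x), IsC1PathIn U γ → curveIntegral ω γ = 0

namespace IsConservativeOn

theorem curveIntegral_eq (h : IsConservativeOn ω U) (hω : ContinuousOn ω U) {γ γ' : Path x y}
    (hγ : IsC1PathIn U γ) (hγ' : IsC1PathIn U γ') : curveIntegral ω γ = curveIntegral ω γ' := by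
  have hloop := h x (γ.trans γ'.symm) (hγ.trans hγ'.symm)
  rwa [curveIntegral_trans (hγ.curveIntegrable hω) (hγ'.symm.curveIntegrable hω),
    curveIntegral_symm, add_neg_eq_zero] at hloop

theorem exists_curveIntegral_eq_sub (h : IsConservativeOn ω U) (hω : ContinuousOn ω U) :
    ∃ f : E → F, ∀ (x y : E) (γ : Path x y), IsC1PathIn U γ → curveIntegral ω γ = f y - f x := by
  obtain ⟨b, joined_b, b_eq⟩ := C1JoinedIn.exists_basepoint U
  have exists_value : ∀ x ∈ U, ∃ c : F, ∃ γ : Path (b x) x,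
      IsC1PathIn U γ ∧ curveIntegral ω γ = c := fun x hx ↦
    let ⟨γ, hγ⟩ := joined_b x hx
    ⟨_, γ, hγ, rfl⟩
  choose! f hf using exists_value
  refine ⟨f, fun x y γ hγ ↦ ?_⟩
  obtain ⟨α, hα, hαx⟩ := hf x hγ.source_mem
  obtain ⟨β, hβ, hβy⟩ : ∃ β : Path (b x) y, IsC1PathIn U β ∧ curveIntegral ω β = f y :=
    b_eq x y ⟨γ, hγ⟩ ▸ hf y hγ.target_mem
  rw [eq_sub_iff_add_eq', ← hαx, ← hβy,
    ← curveIntegral_trans (hα.curveIntegrable hω) (hγ.curveIntegrable hω)]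
  exact h.curveIntegral_eq hω (hα.trans hγ) hβ

end IsConservativeOn

theorem curveIntegral_segment_eq_sub {f : E → F}
    (hf : ∀ (x y : E) (γ : Path x y), IsC1PathIn U γ → curveIntegral ω γ = f y - f x)
    (hxy : segment ℝ x y ⊆ U) : curveIntegral ω (Path.segment x y) = f y - f x := by
  have hC1 : ContDiffOn ℝ 1 (Path.segment x y).extend I :=
    (AffineMap.contDiff_lineMap x y).contDiffOn.congr (Path.eqOn_extend_segment x y)
  have hmem : ∀ t, Path.segment x y t ∈ U := range_subset_iff.1 (Path.range_segment x y ▸ hxy)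
  rw [← hf x y _ (isC1PathIn_smoothReparam hC1 hmem), curveIntegral_smoothReparam ω
    ((hC1.differentiableOn one_ne_zero).mono Ioo_subset_Icc_self)]

theorem IsConservativeOn.exists_forall_hasFDerivAt [CompleteSpace F] (h : IsConservativeOn ω U)
    (hU : IsOpen U) (hω : ContinuousOn ω U) :
    ∃ f : E → F, ∀ x ∈ U, HasFDerivAt f (ω x) x := by
  obtain ⟨f, hf⟩ := h.exists_curveIntegral_eq_sub hω
  refine ⟨f, fun x hx ↦ ?_⟩
  have hcont : ∀ᶠ z in 𝓝 x, ContinuousAt ω z := by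
    filter_upwards [hU.mem_nhds hx] with z hz using hω.continuousAt (hU.mem_nhds hz)
  have hseg : ∀ᶠ y in 𝓝 x, segment ℝ x y ⊆ U := by
    obtain ⟨r, hr, hrU⟩ := Metric.isOpen_iff.1 hU x hx
    filter_upwards [Metric.ball_mem_nhds x hr] with y hy
    exact ((convex_ball x r).segment_subset (Metric.mem_ball_self hr) hy).trans hrU
  have hderiv := (HasFDerivAt.curveIntegral_segment_source' hcont).const_add (f x)
  refine hderiv.congr_of_eventuallyEq ?_
  filter_upwards [hseg] with y hxy
  rw [curveIntegral_segment_eq_sub hf hxy, add_sub_cancel]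

end Conservative

theorem stmt_9_general {E : Type*} [NormedAddCommGroup E] [InnerProductSpace ℝ E] [CompleteSpace E]
    {U : Set E} (hU : IsOpen U) {a : E → E} (ha : ContinuousOn a U)
    (hcons : ∀ γ : ℝ → E, ContDiff ℝ 1 γ → γ 0 = γ 1 → (∀ t ∈ Icc (0 : ℝ) 1, γ t ∈ U) →
      ∫ t in (0 : ℝ)..1, ⟪a (γ t), deriv γ t⟫ = 0) :
    ∃ φ : E → ℝ, ∀ x ∈ U, HasGradientAt φ (a x) x := by
  have conservative : IsConservativeOn (fun x ↦ innerSL ℝ (a x)) U := fun x γ hγ ↦ by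
    rw [curveIntegral_eq_intervalIntegral_deriv]
    exact hcons γ.extend hγ.contDiff (by simp) fun t _ ↦ hγ.mem _
  obtain ⟨φ, hφ⟩ :=
    conservative.exists_forall_hasFDerivAt hU ((innerSL ℝ).continuous.comp_continuousOn ha)
  exact ⟨φ, fun x hx ↦ hasGradientAt_iff_hasFDerivAt.2 (hφ x hx)⟩

theorem stmt_9 (n : ℕ) (hn : 1 ≤ n) (U : Set (EuclideanSpace ℝ (Fin n)))
    (hUopen : IsOpen U) (hUconn : IsConnected U)
    (a : EuclideanSpace ℝ (Fin n) → EuclideanSpace ℝ (Fin n))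
    (ha : ContinuousOn a U)
    (hcons : ∀ γ : ℝ → EuclideanSpace ℝ (Fin n), ContDiff ℝ 1 γ → γ 0 = γ 1 →
      (∀ t ∈ Set.Icc (0:ℝ) 1, γ t ∈ U) →
      ∫ t in (0:ℝ)..1, ⟪a (γ t), deriv γ t⟫ = 0) :
    ∃ φ : EuclideanSpace ℝ (Fin n) → ℝ, ∀ x ∈ U, HasGradientAt φ (a x) x :=
  stmt_9_general hUopen ha hcons
end

section
/- Let U ⊆ E be open, let φ : E → ℝ satisfy ContDiffOn ℝ 2 φ U, and let ψ be a test function on U. Then integration by parts holds: ∫ x in U, ⟪∇φ x, ∇ψ x⟫ = − ∫ x in U, ψ x * Δφ x. -/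
open MeasureTheory RealInnerProductSpace

/-! Expand the inner product of the gradients in an orthonormal basis `b` and integrate by parts in
each direction `b i`. The function `φ` is only controlled on `U`, but every integrand is a
product with `ψ` or one of its derivatives, hence continuous on the whole space and compactly
supported inside `U`; so the integrals over `U` are integrals over the whole space, where
integration by parts has no boundary term. -/

section Bilinear

variable {F G W : Type*} [NormedAddCommGroup F] [NormedSpace ℝ F] [NormedAddCommGroup G]
  [NormedSpace ℝ G] [NormedAddCommGroup W] [NormedSpace ℝ W] (B : F →L[ℝ] G →L[ℝ] W)

lemma integrable_bilinear_of_tsupport_subset {X : Type*} [TopologicalSpace X] [MeasurableSpace X]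
    [OpensMeasurableSpace X] {μ : Measure X} [IsFiniteMeasureOnCompacts μ] {U : Set X}
    {f : X → F} {g : X → G} (hU : IsOpen U) (hf : ContinuousOn f U) (hg : Continuous g)
    (hgc : HasCompactSupport g) (hgU : tsupport g ⊆ U) :
    Integrable (fun x ↦ B (f x) (g x)) μ := by
  have hsupp : tsupport (fun x ↦ B (f x) (g x)) ⊆ tsupport g :=
    closure_mono fun x hx hgx ↦ hx (by simp only [hgx, map_zero])
  refine Continuous.integrable_of_hasCompactSupport (continuous_of_tsupport fun x hx ↦ ?_)
    (hgc.mono' (subset_closure.trans hsupp))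
  have hfx : ContinuousAt f x := hf.continuousAt (hU.mem_nhds (hgU (hsupp hx)))
  exact (B.continuous.continuousAt.comp hfx).clm_apply hg.continuousAt

variable {E : Type*} [NormedAddCommGroup E] [NormedSpace ℝ E] [MeasurableSpace E]
  {μ : Measure E} {U : Set E} {f : E → F} {g : E → G}

lemma integrable_bilinear_fderiv_left_of_tsupport_subset [OpensMeasurableSpace E]
    [IsFiniteMeasureOnCompacts μ] (hU : IsOpen U) (hf : ContDiffOn ℝ 1 f U) (hg : Continuous g)
    (hgc : HasCompactSupport g) (hgU : tsupport g ⊆ U) (v : E) :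
    Integrable (fun x ↦ B (fderiv ℝ f x v) (g x)) μ :=
  integrable_bilinear_of_tsupport_subset B hU
    ((hf.continuousOn_fderiv_of_isOpen hU le_rfl).clm_apply continuousOn_const) hg hgc hgU

lemma integrable_bilinear_fderiv_right_of_tsupport_subset [OpensMeasurableSpace E]
    [IsFiniteMeasureOnCompacts μ] (hU : IsOpen U) (hf : ContinuousOn f U) (hg : ContDiff ℝ 1 g)
    (hgc : HasCompactSupport g) (hgU : tsupport g ⊆ U) (v : E) :
    Integrable (fun x ↦ B (f x) (fderiv ℝ g x v)) μ :=
  integrable_bilinear_of_tsupport_subset B hU hf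
    ((hg.continuous_fderiv one_ne_zero).clm_apply continuous_const)
    (hgc.fderiv_apply ℝ v) ((tsupport_fderiv_apply_subset ℝ v).trans hgU)

theorem setIntegral_bilinear_fderiv_right_eq_neg_left_of_tsupport_subset [FiniteDimensional ℝ E]
    [BorelSpace E] [μ.IsAddHaarMeasure] (hU : IsOpen U) (hf : ContDiffOn ℝ 1 f U)
    (hg : ContDiff ℝ 1 g) (hgc : HasCompactSupport g) (hgU : tsupport g ⊆ U) (v : E) :
    ∫ x in U, B (f x) (fderiv ℝ g x v) ∂μ = -∫ x in U, B (fderiv ℝ f x v) (g x) ∂μ := by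
  have hg_zero {x : E} (hx : x ∉ U) : g x = 0 :=
    image_eq_zero_of_notMem_tsupport fun h ↦ hx (hgU h)
  have hg'_zero {x : E} (hx : x ∉ U) : fderiv ℝ g x = 0 :=
    image_eq_zero_of_notMem_tsupport fun h ↦ hx (hgU (tsupport_fderiv_subset ℝ h))
  rw [setIntegral_eq_integral_of_forall_compl_eq_zero fun x hx ↦ by simp [hg'_zero hx],
    setIntegral_eq_integral_of_forall_compl_eq_zero fun x hx ↦ by simp [hg_zero hx]]
  exact integral_bilinear_fderiv_right_eq_neg_left_of_integrable
    (integrable_bilinear_fderiv_left_of_tsupport_subset B hU hf hg.continuous hgc hgU v)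
    (integrable_bilinear_fderiv_right_of_tsupport_subset B hU hf.continuousOn hg hgc hgU v)
    (integrable_bilinear_of_tsupport_subset B hU hf.continuousOn hg.continuous hgc hgU)
    (fun x hx ↦ (hf.differentiableOn one_ne_zero).differentiableAt (hU.mem_nhds (hgU hx)))
    (fun x _ ↦ hg.differentiable one_ne_zero x)

end Bilinear

section Gradient

variable {ι E : Type*} [Fintype ι] [NormedAddCommGroup E] [InnerProductSpace ℝ E] [CompleteSpace E]
  (b : OrthonormalBasis ι ℝ E)

lemma inner_gradient_gradient_eq_sum_fderiv_mul_fderiv (f g : E → ℝ) (x : E) :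
    ⟪gradient f x, gradient g x⟫ = ∑ i, fderiv ℝ f x (b i) * fderiv ℝ g x (b i) := by
  rw [← b.sum_inner_mul_inner]
  simp only [inner_gradient_left, inner_gradient_right (𝕜 := ℝ) (f := g), conj_trivial]

theorem stmt_11_general [MeasurableSpace E] [BorelSpace E] {μ : Measure E} [μ.IsAddHaarMeasure]
    {U : Set E} {φ ψ : E → ℝ} (hU : IsOpen U) (hφ : ContDiffOn ℝ 2 φ U) (hψ : ContDiff ℝ 1 ψ)
    (hψc : HasCompactSupport ψ) (hψU : tsupport ψ ⊆ U) :
    ∫ x in U, ⟪gradient φ x, gradient ψ x⟫ ∂μ =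
      -∫ x in U, ψ x * ∑ i, fderiv ℝ (fun y ↦ fderiv ℝ φ y (b i)) x (b i) ∂μ := by
  have : FiniteDimensional ℝ E := b.toBasis.finiteDimensional_of_finite
  let B := ContinuousLinearMap.mul ℝ ℝ
  have hφ' (v : E) : ContDiffOn ℝ 1 (fderiv ℝ φ · v) U :=
    (hφ.fderiv_of_isOpen hU one_add_one_eq_two.le).clm_apply contDiffOn_const
  have hint_left (v : E) : IntegrableOn (fun x ↦ fderiv ℝ φ x v * fderiv ℝ ψ x v) U μ :=
    (integrable_bilinear_fderiv_right_of_tsupport_subset B hU (hφ' v).continuousOn hψ hψc hψU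
      v).integrableOn
  have hint_right (v : E) : IntegrableOn (fun x ↦ fderiv ℝ (fderiv ℝ φ · v) x v * ψ x) U μ :=
    (integrable_bilinear_fderiv_left_of_tsupport_subset B hU (hφ' v) hψ.continuous hψc hψU
      v).integrableOn
  have hparts (v : E) : ∫ x in U, fderiv ℝ φ x v * fderiv ℝ ψ x v ∂μ =
      -∫ x in U, fderiv ℝ (fderiv ℝ φ · v) x v * ψ x ∂μ :=
    setIntegral_bilinear_fderiv_right_eq_neg_left_of_tsupport_subset B hU (hφ' v) hψ hψc hψU v
  simp only [inner_gradient_gradient_eq_sum_fderiv_mul_fderiv b, mul_comm (ψ _), Finset.sum_mul]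
  rw [integral_finsetSum _ fun i _ ↦ hint_left (b i),
    integral_finsetSum _ fun i _ ↦ hint_right (b i), ← Finset.sum_neg_distrib]
  exact Finset.sum_congr rfl fun i _ ↦ hparts (b i)

end Gradient

theorem stmt_11 (n : ℕ) (hn : 1 ≤ n) (U : Set (EuclideanSpace ℝ (Fin n))) (hU : IsOpen U)
    (φ : EuclideanSpace ℝ (Fin n) → ℝ) (hφ : ContDiffOn ℝ 2 φ U)
    (ψ : EuclideanSpace ℝ (Fin n) → ℝ) (hψ : ContDiff ℝ (⊤ : ℕ∞) ψ)
    (hψc : HasCompactSupport ψ) (hψU : tsupport ψ ⊆ U) :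
    ∫ x in U, ⟪gradient φ x, gradient ψ x⟫ =
      -∫ x in U, ψ x * (∑ i : Fin n,
        fderiv ℝ (fun y => fderiv ℝ φ y (EuclideanSpace.single i (1:ℝ))) x
          (EuclideanSpace.single i (1:ℝ))) := by
  simpa only [EuclideanSpace.basisFun_apply] using
    stmt_11_general (EuclideanSpace.basisFun (Fin n) ℝ) hU hφ (hψ.of_le (by simp)) hψc hψU
end
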